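/- There exists exactly one stream x : Stream' ℕ satisfying x = (SCons 1 x) ⊗ (SCons 1 x), where ⊗ is the shuffle product (binomial convolution); moreover this unique stream is the stream of factorials starting at 1: x.get n = (n + 1)! for all n. -/

import Mathlib

open Stream'

/-- Shuffle product of streams (binomial convolution). -/
def sshuffle (xs ys : Stream' ℕ) : Stream' ℕ :=
  fun n => ∑ k ∈ Finset.range (n + 1), n.choose k * xs.get k * ys.get (n - k)

infixl:70 " ⊗ " => sshuffle

theorem sum_choose_aux (c : Stream' ℕ) (n : ℕ)
    (h : ∀ k, k ≤ n → c.get k = Nat.factorial k) :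
    ∑ k ∈ Finset.range (n + 1), n.choose k * c.get k * c.get (n - k)
      = Nat.factorial (n + 1) := by
  have : ∀ k ∈ Finset.range (n + 1),
      n.choose k * c.get k * c.get (n - k) = Nat.factorial n := by
    intro k hk
    have hk' : k ≤ n := by
      have := Finset.mem_range.mp hk
      omega
    rw [h k hk', h (n - k) (by omega), Nat.choose_mul_factorial_mul_factorial hk']
  rw [Finset.sum_congr rfl this]
  simp [Nat.factorial_succ]

theorem cons_get_aux (x : Stream' ℕ) (n : ℕ)
    (h : ∀ m, m < n → x.get m = Nat.factorial (m + 1)) :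
    ∀ k, k ≤ n → (Stream'.cons 1 x).get k = Nat.factorial k := by
  intro k hk
  cases k with
  | zero => rfl
  | succ m => exact h m (by omega)

theorem sol_aux (x : Stream' ℕ) (hx : x = (Stream'.cons 1 x) ⊗ (Stream'.cons 1 x)) :
    ∀ n, x.get n = Nat.factorial (n + 1) := by
  intro n
  induction n using Nat.strong_induction_on with
  | _ n ih =>
    have h1 := congrArg (fun s => Stream'.get s n) hx
    exact h1.trans (sum_choose_aux _ n (cons_get_aux x n ih))

theorem stmt_12 :
    (∃! x : Stream' ℕ, x = (Stream'.cons 1 x) ⊗ (Stream'.cons 1 x)) ∧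
    (∀ x : Stream' ℕ, x = (Stream'.cons 1 x) ⊗ (Stream'.cons 1 x) →
      ∀ n, x.get n = Nat.factorial (n + 1)) := by
  refine ⟨⟨fun n => Nat.factorial (n + 1), ?_, ?_⟩, sol_aux⟩
  · funext n
    exact (sum_choose_aux _ n (cons_get_aux _ n (fun _ _ => rfl))).symm
  · intro y hy
    funext n
    exact sol_aux y hy n
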